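/- There exist absolute constants C > 0 and c > 0 with the following property. For every integer d ≥ 1 and every integer n ≥ d^{1/2}·π/(4C), there exists a finite set 𝒞 ⊂ S^d with |𝒞| ≤ c · d^{1/2} (4n/π)^d such that for every P ∈ Π_n^d: (1/2)·sup_{y ∈ S^d}|P(y)| ≤ max_{z ∈ 𝒞} |P(z)| ≤ sup_{y ∈ S^d}|P(y)|. -/

import Mathlib

noncomputable section

open MeasureTheory Real Set
open scoped RealInnerProductSpace

/-- Value at `x` of the orthonormalized Jacobi polynomial `p_n^{(α,β)}`. -/
def jacobiP (α β : ℝ) (n : ℕ) (x : ℝ) : ℝ :=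
  Real.sqrt ((2 * (n : ℝ) + α + β + 1) / 2 ^ (α + β + 1) *
      (Real.Gamma ((n : ℝ) + α + β + 1) * (n.factorial : ℝ) /
        (Real.Gamma ((n : ℝ) + α + 1) * Real.Gamma ((n : ℝ) + β + 1)))) *
    (Real.Gamma (α + n + 1) / ((n.factorial : ℝ) * Real.Gamma (α + β + n + 1))) *
    ∑ m ∈ Finset.range (n + 1),
      (n.choose m : ℝ) * (Real.Gamma (α + β + n + m + 1) / Real.Gamma (α + m + 1)) *
        ((x - 1) / 2) ^ m

/-- The kernel `K_n^{(α,β)}(x) = Σ_{ℓ<n} p_ℓ^{(α,β)}(1) p_ℓ^{(α,β)}(x)`. -/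
def jacobiK (α β : ℝ) (n : ℕ) (x : ℝ) : ℝ :=
  ∑ ℓ ∈ Finset.range n, jacobiP α β ℓ 1 * jacobiP α β ℓ x

/-- The unit sphere `S^d ⊂ ℝ^{d+1}`. -/
abbrev Sph (d : ℕ) := Metric.sphere (0 : EuclideanSpace ℝ (Fin (d + 1))) 1

/-- The rotation invariant Riemannian volume probability measure `μ_d^*` on `S^d`. -/
def sphMeasure (d : ℕ) : Measure (Sph d) :=
  ((volume : Measure (EuclideanSpace ℝ (Fin (d + 1)))).toSphere Set.univ)⁻¹ •
    (volume : Measure (EuclideanSpace ℝ (Fin (d + 1)))).toSphere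

/-- `f : S^d → ℝ` is the restriction to the sphere of an algebraic polynomial in `d+1`
variables of total degree `< n`, i.e. `f ∈ Π_n^d`. -/
def IsSphPoly (d : ℕ) (n : ℝ) (f : Sph d → ℝ) : Prop :=
  ∃ p : MvPolynomial (Fin (d + 1)) ℝ, (p.totalDegree : ℝ) < n ∧
    ∀ y : Sph d, f y = MvPolynomial.eval (fun i => (y : EuclideanSpace ℝ (Fin (d + 1))) i) p

/-- Integral of `f` with respect to a signed measure (via the Jordan decomposition). -/
def sInt {X : Type*} [MeasurableSpace X] (ν : SignedMeasure X) (f : X → ℝ) : ℝ :=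
  (∫ x, f x ∂ν.toJordanDecomposition.posPart) - ∫ x, f x ∂ν.toJordanDecomposition.negPart

/-- Integral of `f` over a set `s` with respect to a signed measure. -/
def sIntOn {X : Type*} [MeasurableSpace X] (ν : SignedMeasure X) (s : Set X) (f : X → ℝ) : ℝ :=
  (∫ x in s, f x ∂ν.toJordanDecomposition.posPart) -
    ∫ x in s, f x ∂ν.toJordanDecomposition.negPart

/-- `ν` is a quadrature measure of order `n` on `S^d`. -/
def IsQuadrature (d : ℕ) (n : ℝ) (ν : SignedMeasure (Sph d)) : Prop :=
  ∀ f : Sph d → ℝ, IsSphPoly d n f → sInt ν f = ∫ y, f y ∂sphMeasure d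

/-- `ν` satisfies the Marcinkiewicz-Zygmund inequality of order `n` with constant `c`;
`ν ∈ MZ(d;n)` means this holds for some `c`, and `|||ν|||_{d;n}` is the least such `c`. -/
def IsMZ (d : ℕ) (n : ℝ) (ν : SignedMeasure (Sph d)) (c : ℝ) : Prop :=
  ∀ f : Sph d → ℝ, IsSphPoly d (n / 2) f →
    (∫ y, (f y) ^ 2 ∂ν.totalVariation) ≤ c * ∫ y, (f y) ^ 2 ∂sphMeasure d

/-- `ω_d`, the volume of `S^d`. -/
def omegaS (d : ℕ) : ℝ := 2 * Real.pi ^ (((d : ℝ) + 1) / 2) / Real.Gamma (((d : ℝ) + 1) / 2)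

/-- The reproducing kernel `K_{d;n}` of `Π_n^d`. -/
def sphK (d n : ℕ) (x : ℝ) : ℝ :=
  (omegaS d / omegaS (d - 1)) * jacobiK ((d : ℝ) / 2 - 1) ((d : ℝ) / 2 - 1) n x

/-- The kernel `Φ̃_{d;n,r}`. -/
def PhiTilde (d n : ℕ) (r : ℝ) (x : ℝ) : ℝ :=
  sphK d ((d + 2) * n) x *
    (jacobiP ((d : ℝ) / 2 + r) ((d : ℝ) / 2 - 2) (d * n) x /
      jacobiP ((d : ℝ) / 2 + r) ((d : ℝ) / 2 - 2) (d * n) 1)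

/-- The kernel `Φ_{d;n,r}`. -/
def Phi (d n : ℕ) (r : ℝ) (x : ℝ) : ℝ := PhiTilde d n r x * ((1 + x) / 2) ^ n

/-- The inner product `x·y` of two points of `S^d`. -/
def ip {d : ℕ} (x y : Sph d) : ℝ :=
  ⟪(x : EuclideanSpace ℝ (Fin (d + 1))), (y : EuclideanSpace ℝ (Fin (d + 1)))⟫

/-- The operator `σ_{d;n,r}(ν, f)`. -/
def sigmaOp (d n : ℕ) (r : ℝ) (ν : SignedMeasure (Sph d)) (f : Sph d → ℝ) (x : Sph d) : ℝ :=
  sInt ν (fun y => f y * Phi d n r (ip x y))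

/-- The operator `σ̃_{d;n,r}(ν, f)`. -/
def sigmaTildeOp (d n : ℕ) (r : ℝ) (ν : SignedMeasure (Sph d)) (f : Sph d → ℝ) (x : Sph d) : ℝ :=
  sInt ν (fun y => f y * PhiTilde d n r (ip x y))

/-- The uniform (supremum) norm `‖f‖_∞`. -/
def supNorm {X : Type*} (f : X → ℝ) : ℝ := sSup (Set.range fun x => |f x|)

/-- `E_{d;n}(f)`, the degree of approximation of `f` from `Π_n^d` in the uniform norm. -/
def bestApprox (d : ℕ) (n : ℝ) (f : Sph d → ℝ) : ℝ :=
  sInf {t | ∃ g, IsSphPoly d n g ∧ ∀ y, |f y - g y| ≤ t}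

/-- `dim Π_n^d = (2n+d−2)·Γ(n+d−1)/(Γ(n)·Γ(d+1))` (for `n ≥ 2`). -/
def dimPi (d n : ℕ) : ℝ :=
  (2 * (n : ℝ) + d - 2) * Real.Gamma ((n : ℝ) + d - 1) /
    (Real.Gamma n * Real.Gamma ((d : ℝ) + 1))

/-!
If a trigonometric polynomial `T` of degree `n` with `|T| ≤ 1` satisfies the Bernstein–Szegő
inequality `(n T) ^ 2 + T' ^ 2 ≤ n ^ 2`, then `arcsin ∘ T` is `n`-Lipschitz, so near a maximum `T`
lies above the cosine of frequency `n` (M. Riesz). On the great circle through a point where `|P|`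
is maximal, this shows that `|P|` stays above half its maximum up to angle `π / (3 n)`, in
particular up to distance `1 / n`. Hence every `1 / n`-net of the sphere is norming.

A maximal separated set would be too large as a net. Instead, cover greedily by caps of radius
`5 / (6 n)` until only a part of exponentially small measure is left, then pack caps of radius
`1 / (6 n)` into the rest. Up to a polynomial factor in `d` this takes `(6 n / 5 + 2) ^ d` points.
As `6 / 5 < 4 / π`, the ratio `(3 π / 10) ^ d` absorbs both the polynomial factor and the factor
`exp (O (√d))` that `+ 2` contributes for `n` at least of order `√d`.
-/

theorem re_mul_one_div_sub_le {z a : ℂ} (hz : ‖z‖ = 1) (ha : 1 < ‖a‖) :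
    (z * (1 / (z - a))).re ≤ 1 / 2 := by
  have hz_sq : Complex.normSq z = 1 := by simp [Complex.normSq_eq_norm_sq, hz]
  have ha_sq : 1 < Complex.normSq a := by
    rw [Complex.normSq_eq_norm_sq]
    exact one_lt_pow₀ ha two_ne_zero
  have hza : 0 < Complex.normSq (z - a) :=
    Complex.normSq_pos.2 (sub_ne_zero.2 (by rintro rfl; exact ha.ne' hz))
  rw [mul_one_div, Complex.div_re, ← add_div, div_le_iff₀ hza]
  simp only [Complex.normSq_apply, Complex.sub_re, Complex.sub_im] at *
  linarith

theorem re_mul_derivative_div_eval_le {f : Polynomial ℂ} {N : ℕ} (hN : f.natDegree ≤ N)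
    (hf : ∀ w, ‖w‖ ≤ 1 → f.eval w ≠ 0) {z : ℂ} (hz : ‖z‖ = 1) :
    (z * (f.derivative.eval z / f.eval z)).re ≤ N / 2 := by
  have hroot : ∀ w ∈ f.roots, (z * (1 / (z - w))).re ≤ 1 / 2 := fun w hw =>
    re_mul_one_div_sub_le hz <| not_le.1 fun hw_le =>
      hf w hw_le (Polynomial.isRoot_of_mem_roots hw)
  calc (z * (f.derivative.eval z / f.eval z)).re
      = (f.roots.map fun w => (z * (1 / (z - w))).re).sum := by
        rw [(IsAlgClosed.splits f).eval_derivative_div_eval_of_ne_zero (hf z hz.le),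
          ← Multiset.sum_map_mul_left]
        exact (map_multiset_sum Complex.reAddGroupHom _).trans (by rw [Multiset.map_map]; rfl)
    _ ≤ f.roots.card * (1 / 2) := by
        refine (Multiset.sum_le_card_nsmul _ (1 / 2 : ℝ) ?_).trans_eq (by
          rw [Multiset.card_map, nsmul_eq_mul])
        simpa only [Multiset.forall_mem_map_iff] using hroot
    _ ≤ N / 2 := by
        have : (f.roots.card : ℝ) ≤ N := mod_cast f.card_roots'.trans hN
        linarith

theorem norm_eval_le_one_of_norm_le_one {q : Polynomial ℂ}
    (hq : ∀ w, ‖w‖ = 1 → ‖q.eval w‖ ≤ 1) {w : ℂ} (hw : ‖w‖ ≤ 1) : ‖q.eval w‖ ≤ 1 := by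
  refine Complex.norm_le_of_forall_mem_frontier_norm_le (f := fun w => q.eval w)
    (U := Metric.ball 0 1) Metric.isBounded_ball q.differentiable.diffContOnCl (fun x hx => ?_) ?_
  · rw [frontier_ball _ one_ne_zero] at hx
    exact hq x (by simpa using hx)
  · rw [closure_ball _ one_ne_zero]
    simpa using hw

theorem re_mul_derivative_div_eval_sub_le {q : Polynomial ℂ} {N : ℕ} (hN : q.natDegree ≤ N)
    (hq : ∀ w, ‖w‖ = 1 → ‖q.eval w‖ ≤ 1) {m z : ℂ} (hm : 1 < ‖m‖) (hz : ‖z‖ = 1) :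
    (z * (q.derivative.eval z / (q.eval z - m))).re ≤ N / 2 := by
  have hne : ∀ w, ‖w‖ ≤ 1 → (q - Polynomial.C m).eval w ≠ 0 := fun w hw h => by
    rw [Polynomial.eval_sub, Polynomial.eval_C, sub_eq_zero] at h
    exact (norm_eval_le_one_of_norm_le_one hq hw).not_gt (h ▸ hm)
  simpa using re_mul_derivative_div_eval_le (Polynomial.natDegree_sub_C.trans_le hN) hne hz

/-- `T` is a real trigonometric polynomial of degree at most `n`. The encoding asks that
`z ^ n * T t`, where `z = exp (i t)`, be an algebraic polynomial in `z` of degree at most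
`2 * n`. -/
def IsTrigPoly (n : ℕ) (T : ℝ → ℝ) : Prop :=
  ∃ q : Polynomial ℂ, q.natDegree ≤ 2 * n ∧
    ∀ t : ℝ, q.eval (Complex.exp (t * Complex.I)) = Complex.exp (t * Complex.I) ^ n * (T t : ℂ)

namespace IsTrigPoly

theorem const (n : ℕ) (c : ℝ) : IsTrigPoly n fun _ => c :=
  ⟨Polynomial.C (c : ℂ) * Polynomial.X ^ n,
    (Polynomial.natDegree_C_mul_X_pow_le _ _).trans (by lia), fun t => by
      rw [Polynomial.eval_mul, Polynomial.eval_C, Polynomial.eval_X_pow, mul_comm]⟩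

theorem mono {m n : ℕ} {T : ℝ → ℝ} (hT : IsTrigPoly m T) (hmn : m ≤ n) : IsTrigPoly n T := by
  obtain ⟨q, hq, hqT⟩ := hT
  refine ⟨q * Polynomial.X ^ (n - m), Polynomial.natDegree_mul_le.trans ?_, fun t => ?_⟩
  · rw [Polynomial.natDegree_X_pow]
    lia
  · rw [Polynomial.eval_mul, hqT, Polynomial.eval_X_pow, mul_right_comm, ← pow_add,
      Nat.add_sub_cancel' hmn]

theorem add {n : ℕ} {S T : ℝ → ℝ} (hS : IsTrigPoly n S) (hT : IsTrigPoly n T) :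
    IsTrigPoly n fun t => S t + T t := by
  obtain ⟨p, hp, hpS⟩ := hS
  obtain ⟨q, hq, hqT⟩ := hT
  refine ⟨p + q, Polynomial.natDegree_add_le_of_degree_le hp hq, fun t => ?_⟩
  rw [Polynomial.eval_add, hpS, hqT, Complex.ofReal_add, mul_add]

theorem mul {m n : ℕ} {S T : ℝ → ℝ} (hS : IsTrigPoly m S) (hT : IsTrigPoly n T) :
    IsTrigPoly (m + n) fun t => S t * T t := by
  obtain ⟨p, hp, hpS⟩ := hS
  obtain ⟨q, hq, hqT⟩ := hT
  refine ⟨p * q, Polynomial.natDegree_mul_le.trans (by lia), fun t => ?_⟩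
  rw [Polynomial.eval_mul, hpS, hqT, Complex.ofReal_mul, pow_add, mul_mul_mul_comm]

theorem pow {n : ℕ} {T : ℝ → ℝ} (hT : IsTrigPoly n T) (k : ℕ) :
    IsTrigPoly (k * n) fun t => T t ^ k := by
  induction k with
  | zero => simpa using const 0 1
  | succ k ih => simpa only [pow_succ, Nat.succ_mul] using ih.mul hT

theorem sum {ι : Type*} {n : ℕ} {T : ι → ℝ → ℝ} {s : Finset ι}
    (hT : ∀ i ∈ s, IsTrigPoly n (T i)) : IsTrigPoly n fun t => ∑ i ∈ s, T i t := by
  classical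
  induction s using Finset.induction_on with
  | empty => simpa using const n 0
  | insert i s hi ih =>
    simp only [Finset.sum_insert hi]
    exact (hT i (s.mem_insert_self i)).add (ih fun j hj => hT j (Finset.mem_insert_of_mem hj))

theorem prod {ι : Type*} {n : ι → ℕ} {T : ι → ℝ → ℝ} {s : Finset ι}
    (hT : ∀ i ∈ s, IsTrigPoly (n i) (T i)) :
    IsTrigPoly (∑ i ∈ s, n i) fun t => ∏ i ∈ s, T i t := by
  classical
  induction s using Finset.induction_on with
  | empty => simpa using const 0 1
  | insert i s hi ih =>
    simp only [Finset.prod_insert hi, Finset.sum_insert hi]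
    exact (hT i (s.mem_insert_self i)).mul (ih fun j hj => hT j (Finset.mem_insert_of_mem hj))

theorem cos_mul_add_sin_mul (a b : ℝ) : IsTrigPoly 1 fun t => cos t * a + sin t * b := by
  refine ⟨Polynomial.C ((a - b * Complex.I) / 2) * Polynomial.X ^ 2 +
    Polynomial.C ((a + b * Complex.I) / 2), by compute_degree, fun t => ?_⟩
  simp only [Polynomial.eval_add, Polynomial.eval_mul, Polynomial.eval_C, Polynomial.eval_pow,
    Polynomial.eval_X]
  push_cast
  rw [Complex.exp_mul_I]
  linear_combination (-(a + b * Complex.I) / 2) * Complex.sin_sq_add_cos_sq (t : ℂ) +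
    ((a * Complex.sin t - b * Complex.I * Complex.sin t) / 2 - b * Complex.cos t) * Complex.sin t *
      Complex.I_sq

theorem differentiable {n : ℕ} {T : ℝ → ℝ} (hT : IsTrigPoly n T) : Differentiable ℝ T := by
  obtain ⟨q, -, hqT⟩ := hT
  have hT_eq : T = fun t : ℝ => Complex.reCLM
      (q.eval (Complex.exp (t * Complex.I)) / Complex.exp (t * Complex.I) ^ n) := by
    funext t
    rw [hqT, mul_div_cancel_left₀ _ (pow_ne_zero _ (Complex.exp_ne_zero _)), Complex.reCLM_apply,
      Complex.ofReal_re]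
  have hexp : Differentiable ℝ fun t : ℝ => Complex.exp (t * Complex.I) :=
    (Complex.ofRealCLM.differentiable.mul_const _).cexp
  have hq : Differentiable ℝ fun z : ℂ => q.eval z := q.differentiable.restrictScalars ℝ
  rw [hT_eq]
  exact Complex.reCLM.differentiable.comp
    ((hq.comp hexp).div (hexp.pow n) fun t => pow_ne_zero _ (Complex.exp_ne_zero _))

theorem exp_mul_eval_derivative {q : Polynomial ℂ} {n : ℕ} {T : ℝ → ℝ}
    (hqT : ∀ t : ℝ, q.eval (Complex.exp (t * Complex.I)) = Complex.exp (t * Complex.I) ^ n * T t)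
    {t : ℝ} (hT : DifferentiableAt ℝ T t) :
    Complex.exp (t * Complex.I) * q.derivative.eval (Complex.exp (t * Complex.I)) =
      Complex.exp (t * Complex.I) ^ n * (n * T t - deriv T t * Complex.I) := by
  set z := Complex.exp (t * Complex.I)
  have hexp : HasDerivAt (fun s : ℝ => Complex.exp (s * Complex.I)) (z * Complex.I) t := by
    simpa using ((Complex.ofRealCLM.hasDerivAt (x := t)).mul_const Complex.I).cexp
  have hleft : HasDerivAt (fun s : ℝ => q.eval (Complex.exp (s * Complex.I)))
      (q.derivative.eval z * (z * Complex.I)) t :=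
    HasDerivAt.comp (h₂ := fun w : ℂ => q.eval w) t (q.hasDerivAt z) hexp
  have hright : HasDerivAt (fun s : ℝ => Complex.exp (s * Complex.I) ^ n * (T s : ℂ))
      (n * z ^ (n - 1) * (z * Complex.I) * T t + z ^ n * (deriv T t : ℝ)) t :=
    (hexp.pow n).mul hT.hasDerivAt.ofReal_comp
  have hderiv := hleft.unique (by simpa only [hqT] using hright)
  have hpow : n * z ^ (n - 1) * z = n * z ^ n := by
    cases n <;> simp [pow_succ, mul_assoc]
  linear_combination (-Complex.I) * hderiv + T t * hpow +
    (z * q.derivative.eval z - n * z ^ (n - 1) * z * T t) * Complex.I_sq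

theorem norm_eval_le_one {q : Polynomial ℂ} {n : ℕ} {T : ℝ → ℝ}
    (hqT : ∀ t : ℝ, q.eval (Complex.exp (t * Complex.I)) = Complex.exp (t * Complex.I) ^ n * T t)
    (hT : ∀ t, |T t| ≤ 1) {w : ℂ} (hw : ‖w‖ = 1) : ‖q.eval w‖ ≤ 1 := by
  have hw_exp : w = Complex.exp (w.arg * Complex.I) := by
    simpa [hw] using (Complex.norm_mul_exp_arg_mul_I w).symm
  rw [hw_exp, hqT, norm_mul, norm_pow, Complex.norm_exp_ofReal_mul_I, one_pow, one_mul,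
    Complex.norm_real]
  exact hT _

theorem mul_add_deriv_mul_le {n : ℕ} {T : ℝ → ℝ} (hT : IsTrigPoly n T) (hT_le : ∀ t, |T t| ≤ 1)
    {u v : ℝ} (huv : 1 < u ^ 2 + v ^ 2) (t : ℝ) :
    n * T t * u + deriv T t * v ≤ n * (u ^ 2 + v ^ 2) := by
  have hdiff := hT.differentiable t
  obtain ⟨q, hq, hqT⟩ := hT
  set z := Complex.exp (t * Complex.I) with hz_def
  have hz : ‖z‖ = 1 := Complex.norm_exp_ofReal_mul_I t
  set m : ℂ := ⟨u, v⟩ with hm_def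
  have hm : 1 < ‖m‖ := by
    rw [Complex.norm_eq_sqrt_sq_add_sq]
    exact Real.lt_sqrt_of_sq_lt (by simpa using huv)
  have hTm : 0 < Complex.normSq (T t - m) := Complex.normSq_pos.2 <| sub_ne_zero.2 fun h => by
    rw [← h, Complex.norm_real] at hm
    exact (hT_le t).not_gt hm
  have hre : (z * (q.derivative.eval z / (q.eval z - z ^ n * m))).re ≤ (2 * n : ℕ) / 2 :=
    re_mul_derivative_div_eval_sub_le hq (fun w hw => norm_eval_le_one hqT hT_le hw)
      (by rwa [norm_mul, norm_pow, hz, one_pow, one_mul]) hz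
  rw [hqT t, ← hz_def, ← mul_sub, ← mul_div_assoc, exp_mul_eval_derivative hqT hdiff,
    mul_div_mul_left _ _ (pow_ne_zero _ (Complex.exp_ne_zero _)), Complex.div_re, ← add_div,
    div_le_iff₀ hTm, Complex.normSq_apply] at hre
  simp only [hm_def, Complex.sub_re, Complex.sub_im, Complex.mul_re, Complex.mul_im,
    Complex.natCast_re, Complex.natCast_im, Complex.ofReal_re, Complex.ofReal_im, Complex.I_re,
    Complex.I_im, Nat.cast_mul, Nat.cast_ofNat] at hre
  linarith

theorem bernstein_szego {n : ℕ} {T : ℝ → ℝ} (hT : IsTrigPoly n T) (hT_le : ∀ t, |T t| ≤ 1)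
    (t : ℝ) : (n * T t) ^ 2 + deriv T t ^ 2 ≤ n ^ 2 := by
  set A := √((n * T t) ^ 2 + deriv T t ^ 2)
  have hA_sq : A ^ 2 = (n * T t) ^ 2 + deriv T t ^ 2 := Real.sq_sqrt (by positivity)
  have hA_nonneg : 0 ≤ A := Real.sqrt_nonneg _
  rcases hA_nonneg.eq_or_lt with hA | hA
  · rw [← hA_sq, ← hA, zero_pow two_ne_zero]
    positivity
  have hA_le : ∀ r > 1, A ≤ n * r := fun r hr => by
    have hnorm : (n * T t * (r / A)) ^ 2 + (deriv T t * (r / A)) ^ 2 = r ^ 2 := by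
      rw [mul_pow _ (r / A), mul_pow _ (r / A), ← add_mul, ← hA_sq]
      field_simp
    have h := hT.mul_add_deriv_mul_le hT_le (hnorm ▸ one_lt_pow₀ hr two_ne_zero) t
    rw [hnorm] at h
    have hr0 : 0 < r := one_pos.trans hr
    refine le_of_mul_le_mul_right ?_ hr0
    calc A * r = A ^ 2 * (r / A) := by field_simp
      _ ≤ n * r * r := by rw [hA_sq]; linarith
  rw [← hA_sq]
  refine pow_le_pow_left₀ hA.le ?_ 2
  rw [← mul_one (n : ℝ)]
  exact le_mul_of_forall_lt₀ fun a ha r hr => (hA_le r hr).trans (by gcongr)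

end IsTrigPoly

theorem abs_deriv_arcsin_comp_le {f : ℝ → ℝ} {L x : ℝ} (hL : 0 ≤ L) (hf : DifferentiableAt ℝ f x)
    (hx : |f x| < 1) (hf' : deriv f x ^ 2 ≤ L ^ 2 * (1 - f x ^ 2)) :
    |deriv (fun t => arcsin (f t)) x| ≤ L := by
  have hx_sq : 0 < 1 - f x ^ 2 := sub_pos.2 ((sq_lt_one_iff_abs_lt_one _).2 hx)
  have hsqrt : 0 < √(1 - f x ^ 2) := Real.sqrt_pos.2 hx_sq
  have hderiv : deriv (fun t => arcsin (f t)) x = 1 / √(1 - f x ^ 2) * deriv f x :=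
    ((Real.hasDerivAt_arcsin (abs_lt.1 hx).1.ne' (abs_lt.1 hx).2.ne).comp x hf.hasDerivAt).deriv
  rw [hderiv, one_div_mul_eq_div, abs_div, abs_of_pos hsqrt, div_le_iff₀ hsqrt]
  refine abs_le_of_sq_le_sq ?_ (by positivity)
  rwa [mul_pow, Real.sq_sqrt hx_sq.le]

theorem lipschitzWith_arcsin_comp {f : ℝ → ℝ} {L : NNReal} (hf : Differentiable ℝ f)
    (hf_le : ∀ x, |f x| ≤ 1) (hf' : ∀ x, deriv f x ^ 2 ≤ L ^ 2 * (1 - f x ^ 2)) :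
    LipschitzWith L fun x => arcsin (f x) := by
  -- `arcsin` is not differentiable at `±1`, so shrink `f` first and let the factor tend to `1`.
  have hscaled : ∀ s ∈ Ioo (0 : ℝ) 1, LipschitzWith L fun x => arcsin (s * f x) := by
    rintro s ⟨hs0, hs1⟩
    have hlt : ∀ x, |s * f x| < 1 := fun x => by
      rw [abs_mul, abs_of_pos hs0]
      nlinarith [hf_le x]
    have hdiff : ∀ x, DifferentiableAt ℝ (fun t => s * f t) x := fun x => (hf x).const_mul s
    refine lipschitzWith_of_nnnorm_deriv_le (𝕜 := ℝ) (fun x => ?_) fun x => ?_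
    · exact DifferentiableAt.comp (g := arcsin) x (Real.differentiableAt_arcsin.2
        ⟨(abs_lt.1 (hlt x)).1.ne', (abs_lt.1 (hlt x)).2.ne⟩) (hdiff x)
    · refine abs_deriv_arcsin_comp_le L.2 (hdiff x) (hlt x) ?_
      rw [deriv_const_mul _ (hf x)]
      calc (s * deriv f x) ^ 2 ≤ s ^ 2 * (L ^ 2 * (1 - f x ^ 2)) := by
            rw [mul_pow]
            exact mul_le_mul_of_nonneg_left (hf' x) (sq_nonneg s)
        _ = L ^ 2 * (s ^ 2 - (s * f x) ^ 2) := by ring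
        _ ≤ L ^ 2 * (1 - (s * f x) ^ 2) := by
            have : s ^ 2 ≤ 1 := pow_le_one₀ hs0.le hs1.le
            gcongr
  refine LipschitzWith.of_dist_le_mul fun x y => ?_
  have hlim : ∀ x, Filter.Tendsto (fun s : ℝ => arcsin (s * f x)) (nhdsWithin 1 (Iio 1))
      (nhds (arcsin (f x))) := fun x =>
    ((by fun_prop : Continuous fun s : ℝ => arcsin (s * f x)).tendsto' 1 _ (by simp)).mono_left
      nhdsWithin_le_nhds
  refine le_of_tendsto ((hlim x).dist (hlim y)) ?_
  filter_upwards [Ioo_mem_nhdsLT one_pos] with s hs using (hscaled s hs).dist_le_mul x y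

namespace IsTrigPoly

theorem lipschitzWith_arcsin {n : ℕ} {T : ℝ → ℝ} (hT : IsTrigPoly n T) (hT_le : ∀ t, |T t| ≤ 1) :
    LipschitzWith n fun t => arcsin (T t) :=
  lipschitzWith_arcsin_comp hT.differentiable hT_le fun t => by
    rw [NNReal.coe_natCast]
    linarith [hT.bernstein_szego hT_le t]

theorem cos_le_of_abs_le_one {n : ℕ} {T : ℝ → ℝ} (hT : IsTrigPoly n T) (hT_le : ∀ t, |T t| ≤ 1)
    (hT0 : T 0 = 1) {t : ℝ} (ht : n * |t| ≤ π) : cos (n * t) ≤ T t := by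
  have hdist : π / 2 - arcsin (T t) ≤ n * |t| := by
    have h := (hT.lipschitzWith_arcsin hT_le).dist_le_mul 0 t
    rw [hT0, arcsin_one, dist_zero_left, Real.norm_eq_abs, NNReal.coe_natCast] at h
    exact (le_abs_self _).trans h
  calc cos (n * t) = cos (n * |t|) := by rw [← cos_abs, abs_mul, Nat.abs_cast]
    _ ≤ cos (π / 2 - arcsin (T t)) :=
      cos_le_cos_of_nonneg_of_le_pi (by linarith [arcsin_le_pi_div_two (T t)]) ht hdist
    _ = T t := by rw [cos_pi_div_two_sub, sin_arcsin (abs_le.1 (hT_le t)).1 (abs_le.1 (hT_le t)).2]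

theorem mul_cos_le {n : ℕ} {T : ℝ → ℝ} {M : ℝ} (hT : IsTrigPoly n T) (hT_le : ∀ t, |T t| ≤ M)
    (hT0 : T 0 = M) {t : ℝ} (ht : n * |t| ≤ π) : M * cos (n * t) ≤ T t := by
  rcases ((abs_nonneg _).trans (hT_le 0)).eq_or_lt with rfl | hM
  · rw [zero_mul, abs_nonpos_iff.1 (hT_le t)]
  have hscaled : IsTrigPoly (0 + n) fun t => M⁻¹ * T t := (const 0 M⁻¹).mul hT
  rw [zero_add] at hscaled
  have h := hscaled.cos_le_of_abs_le_one (fun t => by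
    rw [abs_mul, abs_inv, abs_of_pos hM]
    exact inv_mul_le_one_of_le₀ (hT_le t) hM.le) (by rw [hT0, inv_mul_cancel₀ hM.ne']) ht
  rwa [inv_mul_eq_div, le_div_iff₀' hM] at h

end IsTrigPoly

theorem isTrigPoly_eval_cos_mul_add_sin_mul {ι : Type*} {n : ℕ}
    {p : MvPolynomial ι ℝ} (hp : p.totalDegree ≤ n) (x u : ι → ℝ) :
    IsTrigPoly n fun t => MvPolynomial.eval (fun i => cos t * x i + sin t * u i) p := by
  simp only [MvPolynomial.eval_eq]
  refine IsTrigPoly.sum fun s hs => ?_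
  have hmonomial : IsTrigPoly (0 + ∑ i ∈ s.support, s i * 1)
      fun t => p.coeff s * ∏ i ∈ s.support, (cos t * x i + sin t * u i) ^ s i :=
    (IsTrigPoly.const 0 _).mul
      (IsTrigPoly.prod fun i _ => (IsTrigPoly.cos_mul_add_sin_mul (x i) (u i)).pow (s i))
  refine hmonomial.mono ((le_of_eq ?_).trans ((MvPolynomial.le_totalDegree hs).trans hp))
  simp only [zero_add, mul_one, Finsupp.sum]

open InnerProductGeometry

section Sphere

variable {E : Type*} [NormedAddCommGroup E] [InnerProductSpace ℝ E] {x y u : E}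

theorem norm_cos_smul_add_sin_smul (hx : ‖x‖ = 1) (hu : ‖u‖ = 1) (hxu : ⟪x, u⟫ = 0) (t : ℝ) :
    ‖cos t • x + sin t • u‖ = 1 := by
  rw [← sq_eq_sq₀ (norm_nonneg _) zero_le_one, one_pow, norm_add_sq_real, norm_smul, norm_smul,
    hx, hu, inner_smul_left, inner_smul_right, hxu, mul_one, mul_one, Real.norm_eq_abs,
    Real.norm_eq_abs, sq_abs, sq_abs]
  simp only [mul_zero, add_zero, cos_sq_add_sin_sq]

theorem exists_eq_cos_smul_add_sin_smul (hx : ‖x‖ = 1) (hy : ‖y‖ = 1) (hxy : sin (angle x y) ≠ 0) :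
    ∃ u : E, ‖u‖ = 1 ∧ ⟪x, u⟫ = 0 ∧ y = cos (angle x y) • x + sin (angle x y) • u := by
  have hinner : ⟪x, y⟫ = cos (angle x y) := inner_eq_cos_angle_of_norm_eq_one hx hy
  have hxx : ⟪x, x⟫ = 1 := by rw [real_inner_self_eq_norm_sq, hx, one_pow]
  have hnorm : ‖y - cos (angle x y) • x‖ = sin (angle x y) := by
    rw [← sq_eq_sq₀ (norm_nonneg _) (sin_angle_nonneg x y), norm_sub_sq_real, norm_smul,
      inner_smul_right, real_inner_comm, hinner, hx, hy, mul_one, Real.norm_eq_abs, sq_abs, sin_sq]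
    ring
  refine ⟨(sin (angle x y))⁻¹ • (y - cos (angle x y) • x), ?_, ?_, ?_⟩
  · rw [norm_smul, hnorm, norm_inv, Real.norm_of_nonneg (sin_angle_nonneg x y),
      inv_mul_cancel₀ hxy]
  · rw [inner_smul_right, inner_sub_right, inner_smul_right, hinner, hxx, mul_one, sub_self,
      mul_zero]
  · rw [smul_inv_smul₀ hxy, add_sub_cancel]

theorem norm_sub_eq_two_mul_sin_half_angle (hx : ‖x‖ = 1) (hy : ‖y‖ = 1) :
    ‖x - y‖ = 2 * sin (angle x y / 2) := by
  have hsin : 0 ≤ sin (angle x y / 2) :=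
    sin_nonneg_of_nonneg_of_le_pi (by linarith [angle_nonneg x y])
      (by linarith [angle_le_pi x y, pi_pos])
  have hcos : cos (angle x y) = 1 - 2 * sin (angle x y / 2) ^ 2 := by
    rw [Real.sin_sq_eq_half_sub, mul_div_cancel₀ _ two_ne_zero]
    ring
  rw [← sq_eq_sq₀ (norm_nonneg _) (by positivity), norm_sub_sq_real, hx, hy,
    inner_eq_cos_angle_of_norm_eq_one hx hy, hcos]
  ring

theorem half_mul_le_sin_mul_pi_div_six {a : ℝ} (ha : 0 ≤ a) (ha1 : a ≤ 1) :
    a / 2 ≤ sin (a * (π / 6)) := by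
  have h := strictConcaveOn_sin_Icc.concaveOn.2 (x := 0) (y := π / 6) ⟨le_rfl, pi_pos.le⟩
    ⟨by positivity, by linarith [pi_pos]⟩ (sub_nonneg.2 ha1) ha (sub_add_cancel 1 a)
  simpa only [smul_eq_mul, sin_zero, mul_zero, zero_add, sin_pi_div_six, mul_one_div] using h

theorem angle_le_pi_div_three_mul_norm_sub (hx : ‖x‖ = 1) (hy : ‖y‖ = 1) (hxy : ‖x - y‖ ≤ 1) :
    angle x y ≤ π / 3 * ‖x - y‖ := by
  have hsin : sin (angle x y / 2) ≤ sin (‖x - y‖ * (π / 6)) := by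
    have := half_mul_le_sin_mul_pi_div_six (norm_nonneg (x - y)) hxy
    linarith [norm_sub_eq_two_mul_sin_half_angle hx hy]
  have hangle : angle x y / 2 ≤ ‖x - y‖ * (π / 6) :=
    (strictMonoOn_sin.le_iff_le
      ⟨by linarith [angle_nonneg x y, pi_pos], by linarith [angle_le_pi x y]⟩
      ⟨by linarith [mul_nonneg (norm_nonneg (x - y)) pi_pos.le, pi_pos], by nlinarith [pi_pos]⟩).1
      hsin
  linarith

end Sphere

theorem mul_cos_angle_le_eval {ι : Type*} [Fintype ι] {n : ℕ} (hn : 1 ≤ n)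
    {p : MvPolynomial ι ℝ} (hp : p.totalDegree ≤ n) {x y : EuclideanSpace ℝ ι} (hx : ‖x‖ = 1)
    (hy : ‖y‖ = 1)
    (hmax : ∀ w : EuclideanSpace ℝ ι, ‖w‖ = 1 →
      |MvPolynomial.eval (fun i => w i) p| ≤ MvPolynomial.eval (fun i => x i) p)
    (hxy : n * angle x y < π) :
    MvPolynomial.eval (fun i => x i) p * cos (n * angle x y) ≤
      MvPolynomial.eval (fun i => y i) p := by
  have hangle : angle x y < π :=
    (le_mul_of_one_le_left (angle_nonneg x y) (mod_cast hn)).trans_lt hxy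
  rcases (angle_nonneg x y).eq_or_lt with h0 | h0
  · obtain rfl : x = y := eq_of_angle_eq_zero_of_norm_eq h0.symm (hx.trans hy.symm)
    rw [← h0, mul_zero, cos_zero, mul_one]
  · obtain ⟨u, hu, hxu, hy_eq⟩ :=
      exists_eq_cos_smul_add_sin_smul hx hy (sin_pos_of_pos_of_lt_pi h0 hangle).ne'
    have h := (isTrigPoly_eval_cos_mul_add_sin_mul hp x u).mul_cos_le
      (fun t => hmax (cos t • x + sin t • u) (norm_cos_smul_add_sin_smul hx hu hxu t))
      (by simp only [cos_zero, sin_zero, one_mul, zero_mul, add_zero])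
      (t := angle x y) (by rw [abs_of_pos h0]; exact hxy.le)
    refine h.trans_eq ?_
    conv_rhs => rw [hy_eq]
    rfl

theorem mul_cos_angle_le_abs_eval {ι : Type*} [Fintype ι] {n : ℕ} (hn : 1 ≤ n)
    {p : MvPolynomial ι ℝ} (hp : p.totalDegree ≤ n) {x y : EuclideanSpace ℝ ι} (hx : ‖x‖ = 1)
    (hy : ‖y‖ = 1)
    (hmax : ∀ w : EuclideanSpace ℝ ι, ‖w‖ = 1 →
      |MvPolynomial.eval (fun i => w i) p| ≤ |MvPolynomial.eval (fun i => x i) p|)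
    (hxy : n * angle x y < π) :
    |MvPolynomial.eval (fun i => x i) p| * cos (n * angle x y) ≤
      |MvPolynomial.eval (fun i => y i) p| := by
  rcases abs_choice (MvPolynomial.eval (fun i => x i) p) with h | h
  · rw [h] at hmax ⊢
    exact (mul_cos_angle_le_eval hn hp hx hy hmax hxy).trans (le_abs_self _)
  · have hneg := mul_cos_angle_le_eval (p := -p) hn (by rwa [MvPolynomial.totalDegree_neg]) hx hy
      (by simpa only [map_neg, abs_neg, h] using hmax) hxy
    rw [map_neg, map_neg] at hneg
    rw [h]
    exact hneg.trans (neg_le_abs _)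

theorem half_mul_abs_eval_le {ι : Type*} [Fintype ι] {n : ℕ} (hn : 1 ≤ n)
    {p : MvPolynomial ι ℝ} (hp : p.totalDegree ≤ n) {x y : EuclideanSpace ℝ ι} (hx : ‖x‖ = 1)
    (hy : ‖y‖ = 1)
    (hmax : ∀ w : EuclideanSpace ℝ ι, ‖w‖ = 1 →
      |MvPolynomial.eval (fun i => w i) p| ≤ |MvPolynomial.eval (fun i => x i) p|)
    (hxy : ‖x - y‖ ≤ 1 / n) :
    1 / 2 * |MvPolynomial.eval (fun i => x i) p| ≤ |MvPolynomial.eval (fun i => y i) p| := by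
  have hn0 : (0 : ℝ) < n := mod_cast hn
  have hangle : n * angle x y ≤ π / 3 :=
    calc n * angle x y ≤ n * (π / 3 * ‖x - y‖) := by
          gcongr
          exact angle_le_pi_div_three_mul_norm_sub hx hy
            (hxy.trans (div_le_one_of_le₀ (mod_cast hn) hn0.le))
      _ ≤ n * (π / 3 * (1 / n)) := by gcongr
      _ = π / 3 := by field_simp
  calc 1 / 2 * |MvPolynomial.eval (fun i => x i) p|
      ≤ |MvPolynomial.eval (fun i => x i) p| * cos (n * angle x y) := by
        rw [mul_comm, ← cos_pi_div_three]
        gcongr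
        exact cos_le_cos_of_nonneg_of_le_pi (mul_nonneg hn0.le (angle_nonneg x y))
          (by linarith [pi_pos]) hangle
    _ ≤ |MvPolynomial.eval (fun i => y i) p| :=
        mul_cos_angle_le_abs_eval hn hp hx hy hmax (by linarith [pi_pos])

theorem norm_sub_le_norm_smul_sub_smul {E : Type*} [NormedAddCommGroup E] [InnerProductSpace ℝ E]
    {u v : E} (hu : ‖u‖ = 1) (hv : ‖v‖ = 1) {s t : ℝ} (hs : 1 ≤ s) (ht : 1 ≤ t) :
    ‖u - v‖ ≤ ‖s • u - t • v‖ := by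
  have hst : ‖s • u - t • v‖ ^ 2 = (s - t) ^ 2 + s * t * ‖u - v‖ ^ 2 := by
    rw [norm_sub_sq_real, norm_sub_sq_real, norm_smul, norm_smul, inner_smul_left,
      inner_smul_right, hu, hv, mul_one, mul_one, Real.norm_eq_abs, Real.norm_eq_abs, sq_abs,
      sq_abs, conj_trivial]
    ring
  refine (sq_le_sq₀ (norm_nonneg _) (norm_nonneg _)).1 ?_
  rw [hst]
  nlinarith [sq_nonneg (s - t), sq_nonneg ‖u - v‖, one_le_mul_of_one_le_of_one_le hs ht]

section Cap

open scoped Pointwise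

variable {E : Type*} [NormedAddCommGroup E] [InnerProductSpace ℝ E]

theorem ball_subset_Ioo_smul_image_ball (x : Metric.sphere (0 : E) 1) {ρ : ℝ} (hρ : 0 < ρ) :
    Metric.ball ((1 + ρ) • (x : E)) ρ ⊆
      Ioo (0 : ℝ) (1 + 2 * ρ) • ((↑) '' Metric.ball x ρ) \
        Ioo (0 : ℝ) 1 • ((↑) '' Metric.ball x ρ) := by
  intro y hy
  rw [Metric.mem_ball, dist_eq_norm] at hy
  have hx : ‖(x : E)‖ = 1 := norm_eq_of_mem_sphere x
  have hcenter : ‖(1 + ρ) • (x : E)‖ = 1 + ρ := by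
    rw [norm_smul, hx, mul_one, Real.norm_of_nonneg (by positivity)]
  have hy_gt : 1 < ‖y‖ := by
    linarith [norm_sub_norm_le ((1 + ρ) • (x : E)) y, norm_sub_rev y ((1 + ρ) • (x : E))]
  have hy_lt : ‖y‖ < 1 + 2 * ρ := by
    linarith [norm_sub_norm_le y ((1 + ρ) • (x : E))]
  have hy0 : ‖y‖ ≠ 0 := (one_pos.trans hy_gt).ne'
  have hproj : ‖‖y‖⁻¹ • y‖ = 1 := by rw [norm_smul, norm_inv, norm_norm, inv_mul_cancel₀ hy0]
  refine ⟨mem_smul.2 ⟨‖y‖, ⟨one_pos.trans hy_gt, hy_lt⟩, ‖y‖⁻¹ • y,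
    ⟨⟨‖y‖⁻¹ • y, by simpa using hproj⟩, ?_, rfl⟩, smul_inv_smul₀ hy0 y⟩, ?_⟩
  · rw [Metric.mem_ball, Subtype.dist_eq, dist_eq_norm]
    refine (norm_sub_le_norm_smul_sub_smul hproj hx hy_gt.le
      (le_add_of_nonneg_right hρ.le)).trans_lt ?_
    rwa [smul_inv_smul₀ hy0]
  · rintro ⟨t, ht, _, ⟨z, -, rfl⟩, rfl⟩
    refine hy_gt.not_gt ?_
    simpa only [norm_smul, norm_eq_of_mem_sphere z, mul_one, Real.norm_of_nonneg ht.1.le]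
      using ht.2

theorem pow_finrank_mul_toSphere_univ_le [FiniteDimensional ℝ E] [MeasurableSpace E] [BorelSpace E]
    (μ : Measure E) [μ.IsAddHaarMeasure] (x : Metric.sphere (0 : E) 1) {ρ : ℝ} (hρ : 0 < ρ) :
    ρ ^ Module.finrank ℝ E * μ.toSphere.real univ ≤
      ((1 + 2 * ρ) ^ Module.finrank ℝ E - 1) * μ.toSphere.real (Metric.ball x ρ) := by
  set cone : Set E := Ioo (0 : ℝ) 1 • ((↑) '' Metric.ball x ρ) with hcone_def
  have hcone_smul : Ioo (0 : ℝ) (1 + 2 * ρ) • ((↑) '' Metric.ball x ρ : Set E) =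
      (1 + 2 * ρ) • cone := by
    rw [hcone_def, ← smul_assoc, LinearOrderedField.smul_Ioo (by positivity), mul_zero,
      mul_one]
  have hcone_bdd : Bornology.IsBounded cone := by
    refine (Metric.isBounded_ball (x := (0 : E)) (r := 1)).subset ?_
    rintro _ ⟨t, ht, _, ⟨z, -, rfl⟩, rfl⟩
    simpa only [mem_ball_zero_iff, norm_smul, norm_eq_of_mem_sphere z, mul_one,
      Real.norm_of_nonneg ht.1.le] using ht.2
  have hball : μ.real (Metric.ball ((1 + ρ) • (x : E)) ρ) =
      ρ ^ Module.finrank ℝ E * μ.real (Metric.ball 0 1) := by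
    rw [measureReal_def, μ.addHaar_ball_of_pos _ hρ, ENNReal.toReal_mul,
      ENNReal.toReal_ofReal (by positivity), measureReal_def]
  have hsmul : μ.real ((1 + 2 * ρ) • cone) = (1 + 2 * ρ) ^ Module.finrank ℝ E * μ.real cone := by
    rw [measureReal_def, μ.addHaar_smul_of_nonneg (by positivity), ENNReal.toReal_mul,
      ENNReal.toReal_ofReal (by positivity), measureReal_def]
  have hcap : μ.toSphere.real (Metric.ball x ρ) = Module.finrank ℝ E * μ.real cone := by
    rw [measureReal_def, μ.toSphere_apply' Metric.isOpen_ball.measurableSet, ENNReal.toReal_mul,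
      ENNReal.toReal_natCast, measureReal_def]
  have hshell := ball_subset_Ioo_smul_image_ball x hρ
  rw [hcone_smul] at hshell
  have hadd : μ.real (Metric.ball ((1 + ρ) • (x : E)) ρ) + μ.real cone ≤
      μ.real ((1 + 2 * ρ) • cone) := by
    have hcone_fin : μ cone ≠ ⊤ := hcone_bdd.measure_lt_top.ne
    rw [← measureReal_union' (disjoint_sdiff_left.mono_left hshell) measurableSet_ball]
    refine measureReal_mono (union_subset (hshell.trans sdiff_subset) ?_)
      (hcone_bdd.smul₀ _).measure_lt_top.ne
    rw [← hcone_smul]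
    exact smul_subset_smul_right (Ioo_subset_Ioo_right (by linarith))
  rw [hball, hsmul] at hadd
  rw [μ.toSphere_real_apply_univ, hcap]
  linear_combination (Module.finrank ℝ E : ℝ) * hadd

end Cap

instance isProbabilityMeasure_sphMeasure (d : ℕ) : IsProbabilityMeasure (sphMeasure d) where
  measure_univ := by
    rw [sphMeasure, Measure.smul_apply, smul_eq_mul]
    exact ENNReal.inv_mul_cancel
      (Measure.measure_univ_ne_zero.2 (Measure.toSphere_ne_zero _)) (measure_ne_top _ _)

theorem pow_succ_le_mul_sphMeasure_ball {d : ℕ} (x : Sph d) {ρ : ℝ} (hρ : 0 < ρ) :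
    ρ ^ (d + 1) ≤ ((1 + 2 * ρ) ^ (d + 1) - 1) * (sphMeasure d).real (Metric.ball x ρ) := by
  set σ := (volume : Measure (EuclideanSpace ℝ (Fin (d + 1)))).toSphere
  have : NeZero σ := ⟨Measure.toSphere_ne_zero _⟩
  have hcap : (sphMeasure d).real (Metric.ball x ρ) =
      (σ.real univ)⁻¹ * σ.real (Metric.ball x ρ) := by
    rw [sphMeasure, measureReal_ennreal_smul_apply, ENNReal.toReal_inv,
      ← measureReal_def]
  have h := pow_finrank_mul_toSphere_univ_le volume x hρ
  rw [finrank_euclideanSpace_fin] at h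
  rw [hcap, mul_left_comm, ← div_eq_inv_mul, le_div_iff₀ measureReal_univ_pos]
  exact h

theorem one_le_mul_sphMeasure_ball {d : ℕ} (x : Sph d) {ρ : ℝ} (hρ : 0 < ρ) :
    1 ≤ 2 * (d + 1) * (2 + 1 / ρ) ^ d * (sphMeasure d).real (Metric.ball x ρ) := by
  have hpow : (1 + 2 * ρ) ^ (d + 1) - 1 ≤ 2 * ρ * (d + 1) * (1 + 2 * ρ) ^ d := by
    have h := abs_pow_sub_pow_le (a := 1 + 2 * ρ) (b := 1) (n := d + 1)
    rw [one_pow, add_sub_cancel_left, abs_one, abs_of_pos (by positivity : 0 < 1 + 2 * ρ),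
      abs_of_pos (by positivity : 0 < 2 * ρ), max_eq_left (by linarith), Nat.add_sub_cancel,
      Nat.cast_succ] at h
    exact (le_abs_self _).trans h
  have hρd : (2 + 1 / ρ) ^ d * ρ ^ d = (1 + 2 * ρ) ^ d := by
    rw [← mul_pow, add_mul, one_div_mul_cancel hρ.ne', add_comm]
  refine le_of_mul_le_mul_right ?_ (pow_pos hρ (d + 1))
  calc 1 * ρ ^ (d + 1)
      ≤ ((1 + 2 * ρ) ^ (d + 1) - 1) * (sphMeasure d).real (Metric.ball x ρ) := by
        rw [one_mul]
        exact pow_succ_le_mul_sphMeasure_ball x hρ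
    _ ≤ 2 * ρ * (d + 1) * (1 + 2 * ρ) ^ d * (sphMeasure d).real (Metric.ball x ρ) := by gcongr
    _ = 2 * (d + 1) * (2 + 1 / ρ) ^ d * (sphMeasure d).real (Metric.ball x ρ) * ρ ^ (d + 1) := by
        rw [← hρd]
        ring

section Covering

variable {X : Type*} [PseudoMetricSpace X] [MeasurableSpace X] [OpensMeasurableSpace X]
  {μ : Measure X} {r s v w : ℝ}

theorem exists_mul_le_measureReal_inter_ball [SecondCountableTopology X] [IsProbabilityMeasure μ]
    (hv : ∀ x, v ≤ μ.real (Metric.ball x r)) {U : Set X} (hU : MeasurableSet U) :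
    ∃ x, v * μ.real U ≤ μ.real (U ∩ Metric.ball x r) := by
  set S : Set (X × X) := {q | q.2 ∈ U ∧ dist q.2 q.1 < r}
  have hS : MeasurableSet S := (measurable_snd hU).inter
    (measurableSet_lt (measurable_snd.dist measurable_fst) measurable_const)
  have hvertical : ∀ x, Prod.mk x ⁻¹' S = U ∩ Metric.ball x r := fun x => rfl
  have hhorizontal : ∀ y ∈ U, (fun x => (x, y)) ⁻¹' S = Metric.ball y r := fun y hy => by
    ext x
    simp [S, hy, dist_comm]
  obtain ⟨x, hx⟩ := exists_lintegral_le (μ := μ) (f := fun x => μ (Prod.mk x ⁻¹' S)) (by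
    rw [← Measure.prod_apply hS]
    exact measure_ne_top _ _)
  rw [← Measure.prod_apply hS, Measure.prod_apply_symm hS, hvertical] at hx
  have hle : ENNReal.ofReal v * μ U ≤ μ (U ∩ Metric.ball x r) :=
    calc ENNReal.ofReal v * μ U = ∫⁻ _ in U, ENNReal.ofReal v ∂μ := (setLIntegral_const ..).symm
      _ ≤ ∫⁻ y in U, μ ((fun x => (x, y)) ⁻¹' S) ∂μ := setLIntegral_mono' hU fun y hy => by
        rw [hhorizontal y hy]
        exact ENNReal.ofReal_le_of_le_toReal (hv y)
      _ ≤ ∫⁻ y, μ ((fun x => (x, y)) ⁻¹' S) ∂μ := setLIntegral_le_lintegral _ _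
      _ ≤ μ (U ∩ Metric.ball x r) := hx
  refine ⟨x, le_trans ?_ (ENNReal.toReal_mono (measure_ne_top _ _) hle)⟩
  rw [ENNReal.toReal_mul, ENNReal.toReal_ofReal']
  exact mul_le_mul_of_nonneg_right (le_max_left _ _) ENNReal.toReal_nonneg

theorem exists_finset_measureReal_compl_biUnion_ball_le [SecondCountableTopology X]
    [IsProbabilityMeasure μ] (hv : ∀ x, v ≤ μ.real (Metric.ball x r)) (k : ℕ) :
    ∃ F : Finset X, F.card ≤ k ∧ μ.real (⋃ z ∈ F, Metric.ball z r)ᶜ ≤ (1 - v) ^ k := by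
  classical
  induction k with
  | zero => exact ⟨∅, by simp, by simp⟩
  | succ k ih =>
    obtain ⟨F, hF_card, hF⟩ := ih
    set V := ⋃ z ∈ F, Metric.ball z r
    have hV : MeasurableSet V := Finset.measurableSet_biUnion _ fun _ _ => measurableSet_ball
    obtain ⟨x, hx⟩ := exists_mul_le_measureReal_inter_ball hv hV.compl
    refine ⟨insert x F, (Finset.card_insert_le _ _).trans (by lia), ?_⟩
    have hinsert : (⋃ z ∈ insert x F, Metric.ball z r)ᶜ = Vᶜ \ Metric.ball x r := by
      rw [Finset.set_biUnion_insert, compl_union, inter_comm, sdiff_eq]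
    have hv_le : 0 ≤ 1 - v := sub_nonneg.2 ((hv x).trans measureReal_le_one)
    calc μ.real (⋃ z ∈ insert x F, Metric.ball z r)ᶜ
        = μ.real Vᶜ - μ.real (Vᶜ ∩ Metric.ball x r) := by
          rw [hinsert, ← measureReal_inter_add_sdiff (s := Vᶜ) (t := Metric.ball x r)
            measurableSet_ball, add_sub_cancel_left]
      _ ≤ μ.real Vᶜ * (1 - v) := by linarith
      _ ≤ (1 - v) ^ (k + 1) := by
          rw [pow_succ]
          gcongr

theorem exists_finset_card_mul_le_forall_dist_lt [IsFiniteMeasure μ] {A U : Set X} (hw : 0 < w)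
    (hA : ∀ y ∈ A, w ≤ μ.real (Metric.ball y s)) (hU : ∀ y ∈ A, Metric.ball y s ⊆ U) :
    ∃ Y : Finset X, Y.card * w ≤ μ.real U ∧ ∀ x ∈ A, ∃ y ∈ Y, dist x y < s + s := by
  obtain ⟨Y, hYA, hY_disj, hY⟩ := Vitali.exists_disjoint_subfamily_covering_enlargement
    (fun y => Metric.ball y s) A (fun _ => 1) 2 one_lt_two (fun _ _ => zero_le_one) 1
    (fun _ _ => le_rfl) fun y hy => nonempty_iff_ne_empty.2 fun h =>
      hw.not_ge ((hA y hy).trans_eq (by rw [h, measureReal_empty]))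
  have hY_fin : Y.Finite := by
    refine Set.finite_coe_iff.1 (Set.finite_univ_iff.1 ?_)
    refine (Measure.finite_const_le_meas_of_disjoint_iUnion μ (ENNReal.ofReal_pos.2 hw)
      (As := fun y : Y => Metric.ball (y : X) s) (fun _ => measurableSet_ball)
      ((pairwise_subtype_iff_pairwise_set _ _).2 hY_disj) (measure_ne_top _ _)).subset ?_
    exact fun y _ => ENNReal.ofReal_le_of_le_toReal (hA y (hYA y.2))
  lift Y to Finset X using hY_fin
  refine ⟨Y, ?_, fun x hx => ?_⟩
  · calc Y.card * w ≤ ∑ y ∈ Y, μ.real (Metric.ball y s) := by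
          rw [← nsmul_eq_mul]
          exact Finset.card_nsmul_le_sum _ _ _ fun y hy => hA y (hYA hy)
      _ = μ.real (⋃ y ∈ Y, Metric.ball y s) :=
        (measureReal_biUnion_finset hY_disj fun _ _ => measurableSet_ball).symm
      _ ≤ μ.real U := measureReal_mono (iUnion₂_subset fun y hy => hU y (hYA hy))
  · obtain ⟨y, hy, hxy, -⟩ := hY x hx
    exact ⟨y, hy, Metric.dist_lt_add_of_nonempty_ball_inter_ball hxy⟩

theorem exists_finset_card_le_forall_dist_lt [SecondCountableTopology X] [IsProbabilityMeasure μ]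
    (hsr : s ≤ r) (hv0 : 0 < v) (hv : ∀ x, v ≤ μ.real (Metric.ball x r)) (hw0 : 0 < w)
    (hw : ∀ x, w ≤ μ.real (Metric.ball x s)) {K : ℝ} (hK : 0 ≤ K) :
    ∃ F : Finset X, (F.card : ℝ) ≤ K / v + 1 + exp (-K) / w ∧
      ∀ x, ∃ z ∈ F, dist x z < r + s := by
  classical
  obtain ⟨F, hF_card, hF⟩ := exists_finset_measureReal_compl_biUnion_ball_le hv ⌈K / v⌉₊
  set V := ⋃ z ∈ F, Metric.ball z r with hV_def
  obtain ⟨Y, hY_card, hY⟩ := exists_finset_card_mul_le_forall_dist_lt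
    (A := {y | Metric.ball y s ⊆ Vᶜ}) hw0 (fun y _ => hw y) (fun y hy => hy)
  have hV : μ.real Vᶜ ≤ exp (-K) := by
    have hx : 1 - v ≥ 0 := by
      obtain ⟨x⟩ := μ.nonempty_of_neZero
      exact sub_nonneg.2 ((hv x).trans measureReal_le_one)
    calc μ.real Vᶜ ≤ (1 - v) ^ ⌈K / v⌉₊ := hF
      _ ≤ exp (-v) ^ ⌈K / v⌉₊ := pow_le_pow_left₀ hx (Real.one_sub_le_exp_neg v) _
      _ = exp (-(⌈K / v⌉₊ * v)) := by rw [← Real.exp_nat_mul, mul_neg]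
      _ ≤ exp (-K) := by
        gcongr
        exact (div_le_iff₀ hv0).1 (Nat.le_ceil _)
  refine ⟨F ∪ Y, ?_, fun x => ?_⟩
  · calc ((F ∪ Y).card : ℝ) ≤ F.card + Y.card := mod_cast Finset.card_union_le _ _
      _ ≤ ⌈K / v⌉₊ + exp (-K) / w := by
        gcongr
        exact (le_div_iff₀ hw0).2 (hY_card.trans hV)
      _ ≤ K / v + 1 + exp (-K) / w := by
        gcongr
        exact (Nat.ceil_lt_add_one (div_nonneg hK hv0.le)).le
  · by_cases hx : Metric.ball x s ⊆ Vᶜ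
    · obtain ⟨y, hy, hxy⟩ := hY x hx
      exact ⟨y, Finset.mem_union_right _ hy, hxy.trans_le (by gcongr)⟩
    · obtain ⟨a, ha, haV⟩ := Set.not_subset.1 hx
      rw [notMem_compl_iff, hV_def, mem_iUnion₂] at haV
      obtain ⟨z, hz, haz⟩ := haV
      refine ⟨z, Finset.mem_union_left _ hz, ?_⟩
      rw [add_comm]
      exact Metric.dist_lt_add_of_nonempty_ball_inter_ball ⟨a, ha, haz⟩

end Covering

theorem exists_finset_sph_card_le_forall_dist_lt (d : ℕ) {δ : ℝ} (hδ : 0 < δ) :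
    ∃ F : Finset (Sph d), (F.card : ℝ) ≤ 8 * (d + 1) ^ 2 * (2 + 6 / (5 * δ)) ^ d ∧
      ∀ x, ∃ z ∈ F, dist x z < δ := by
  have hcap : ∀ {ρ : ℝ}, 0 < ρ → ∀ x : Sph d,
      (2 * (d + 1) * (2 + 1 / ρ) ^ d)⁻¹ ≤ (sphMeasure d).real (Metric.ball x ρ) :=
    fun hρ x => (inv_le_iff_one_le_mul₀' (by positivity)).2 (one_le_mul_sphMeasure_ball x hρ)
  -- Radii `5 δ / 6` and `δ / 6` add up to `δ`; stopping the greedy covering when the uncovered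
  -- part has measure `5 ^ (-d)` balances its cost against that of the packing.
  have hr : 0 < 5 * δ / 6 := by positivity
  have hs : 0 < δ / 6 := by positivity
  have hlog : 0 ≤ log 5 := log_nonneg (by norm_num)
  obtain ⟨F, hF_card, hF⟩ := exists_finset_card_le_forall_dist_lt (by linarith)
    (by positivity) (hcap hr) (by positivity) (hcap hs) (mul_nonneg d.cast_nonneg hlog)
  refine ⟨F, hF_card.trans ?_, fun x => ?_⟩
  · rw [div_inv_eq_mul, div_inv_eq_mul, one_div_div, one_div_div]
    set B := (2 + 6 / (5 * δ)) ^ d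
    have hB : 1 ≤ B := one_le_pow₀ (by linarith [show 0 < 6 / (5 * δ) by positivity])
    have hlog5 : log 5 ≤ 4 := (log_le_sub_one_of_pos (by norm_num)).trans (by norm_num)
    have hexp : exp (-(d * log 5)) * (2 + 6 / δ) ^ d ≤ B := by
      rw [exp_neg, exp_nat_mul, exp_log (by norm_num), ← inv_pow, ← mul_pow]
      refine pow_le_pow_left₀ (by positivity) ?_ d
      rw [mul_comm 5 δ, ← div_div]
      linarith
    calc d * log 5 * (2 * (d + 1) * B) + 1 + exp (-(d * log 5)) * (2 * (d + 1) * (2 + 6 / δ) ^ d)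
        = d * log 5 * (2 * (d + 1) * B) + 1 +
            2 * (d + 1) * (exp (-(d * log 5)) * (2 + 6 / δ) ^ d) := by ring
      _ ≤ d * 4 * (2 * (d + 1) * B) + 6 * (d + 1) * B + 2 * (d + 1) * B := by
        gcongr
        nlinarith [d.cast_nonneg (α := ℝ)]
      _ = 8 * (d + 1) ^ 2 * B := by ring
  · obtain ⟨z, hz, hxz⟩ := hF x
    exact ⟨z, hz, hxz.trans_eq (by ring)⟩

theorem exists_forall_pow_mul_pow_mul_exp_mul_sqrt_le (k : ℕ) {q : ℝ} (hq0 : 0 < q) (hq1 : q < 1)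
    (a : ℝ) : ∃ c, 0 < c ∧ ∀ d : ℕ, (d + 1) ^ k * q ^ d * exp (a * √d) ≤ c := by
  set l := -log √q
  have hq0' : 0 < √q := sqrt_pos.2 hq0
  have hq1' : √q < 1 := (sqrt_lt_sqrt hq0.le hq1).trans_eq sqrt_one
  have hl : 0 < l := neg_pos.2 (log_neg hq0' hq1')
  obtain ⟨M, hM⟩ := (tendsto_pow_const_mul_const_pow_of_abs_lt_one k
    (by rwa [abs_of_pos hq0'])).bddAbove_range
  have hM' : ∀ d : ℕ, (d + 1) ^ k * √q ^ (d + 1) ≤ M := fun d => by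
    simpa only [Nat.cast_succ] using hM (mem_range_self (d + 1))
  have hM0 : 0 < M := (by positivity : (0 : ℝ) < (0 + 1) ^ k * √q ^ (0 + 1)).trans_le
    (by simpa only [Nat.cast_zero] using hM' 0)
  have hexp : ∀ d : ℕ, √q ^ d * exp (a * √d) ≤ exp (a ^ 2 / (4 * l)) := fun d => by
    have hsq : a * √d - l * d ≤ a ^ 2 / (4 * l) := by
      rw [le_div_iff₀ (by positivity)]
      linear_combination sq_nonneg (a - 2 * l * √d) + 4 * l ^ 2 * sq_sqrt (d.cast_nonneg (α := ℝ))
    rw [← exp_log hq0', ← exp_nat_mul, ← exp_add, exp_le_exp]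
    linarith
  refine ⟨(√q)⁻¹ * M * exp (a ^ 2 / (4 * l)), by positivity, fun d => ?_⟩
  calc (d + 1) ^ k * q ^ d * exp (a * √d)
      = (√q)⁻¹ * ((d + 1) ^ k * √q ^ (d + 1)) * (√q ^ d * exp (a * √d)) := by
        rw [pow_succ]
        nth_rw 1 [← mul_self_sqrt hq0.le, mul_pow]
        field_simp
    _ ≤ (√q)⁻¹ * M * exp (a ^ 2 / (4 * l)) := by
        gcongr
        · exact hM' d
        · exact hexp d

theorem exists_forall_sq_mul_pow_le_mul_pow {C : ℝ} (hC : 0 < C) :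
    ∃ c, 0 < c ∧ ∀ d n : ℕ, 0 < n → √d * π / (4 * C) ≤ n →
      8 * (d + 1) ^ 2 * (2 + 6 * n / 5 : ℝ) ^ d ≤ c * (4 * n / π) ^ d := by
  obtain ⟨c, hc, hbound⟩ := exists_forall_pow_mul_pow_mul_exp_mul_sqrt_le 2
    (q := 3 * π / 10) (by positivity) (by linarith [pi_lt_d2]) (20 * C / (3 * π))
  refine ⟨8 * c, by positivity, fun d n hn hdn => ?_⟩
  have hn0 : (0 : ℝ) < n := mod_cast hn
  have hfactor : (2 + 6 * n / 5 : ℝ) = 3 * π / 10 * (5 / (3 * n) + 1) * (4 * n / π) := by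
    field_simp
    ring
  have hexponent : d * (5 / (3 * n)) ≤ 20 * C / (3 * π) * √d := by
    rw [div_le_iff₀ (by positivity)] at hdn
    rw [← mul_div_assoc, div_le_iff₀ (by positivity), div_mul_eq_mul_div, div_mul_eq_mul_div,
      le_div_iff₀ (by positivity)]
    calc d * 5 * (3 * π) = 15 * √d * (√d * π) := by
          nth_rw 1 [← mul_self_sqrt (d.cast_nonneg (α := ℝ))]
          ring
      _ ≤ 15 * √d * (n * (4 * C)) := by gcongr
      _ = 20 * C * √d * (3 * n) := by ring
  have hexp : (5 / (3 * n) + 1 : ℝ) ^ d ≤ exp (20 * C / (3 * π) * √d) :=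
    calc (5 / (3 * n) + 1 : ℝ) ^ d ≤ exp (5 / (3 * n)) ^ d := by
          gcongr
          exact add_one_le_exp _
      _ = exp (d * (5 / (3 * n))) := (exp_nat_mul _ _).symm
      _ ≤ exp (20 * C / (3 * π) * √d) := exp_le_exp.2 hexponent
  calc 8 * (d + 1) ^ 2 * (2 + 6 * n / 5 : ℝ) ^ d
      = 8 * ((d + 1) ^ 2 * (3 * π / 10) ^ d * (5 / (3 * n) + 1) ^ d) * (4 * n / π) ^ d := by
        rw [hfactor, mul_pow, mul_pow]
        ring
    _ ≤ 8 * ((d + 1) ^ 2 * (3 * π / 10) ^ d * exp (20 * C / (3 * π) * √d)) * (4 * n / π) ^ d := by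
        gcongr
    _ ≤ 8 * c * (4 * n / π) ^ d := by
        gcongr
        exact hbound d

theorem abs_le_supNorm {X : Type*} [TopologicalSpace X] [CompactSpace X] {f : X → ℝ}
    (hf : Continuous f) (x : X) : |f x| ≤ supNorm f :=
  le_csSup (isCompact_range hf.abs).bddAbove (mem_range_self x)

theorem exists_abs_eq_supNorm {X : Type*} [TopologicalSpace X] [CompactSpace X] [Nonempty X]
    {f : X → ℝ} (hf : Continuous f) : ∃ x, |f x| = supNorm f :=
  (isCompact_range hf.abs).sSup_mem (range_nonempty _)

theorem IsSphPoly.continuous {d : ℕ} {n : ℝ} {P : Sph d → ℝ} (hP : IsSphPoly d n P) :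
    Continuous P := by
  obtain ⟨p, -, hp⟩ := hP
  rw [funext hp]
  exact (MvPolynomial.continuous_eval p).comp (by fun_prop)

theorem IsSphPoly.half_mul_supNorm_le {d n : ℕ} {P : Sph d → ℝ} (hP : IsSphPoly d n P) {x y : Sph d}
    (hx : |P x| = supNorm P) (hxy : dist x y ≤ 1 / n) : 1 / 2 * supNorm P ≤ |P y| := by
  have hmax := abs_le_supNorm hP.continuous
  obtain ⟨p, hp_deg, hp⟩ := hP
  have hpn : p.totalDegree < n := mod_cast hp_deg
  simp only [← hx, hp] at hmax ⊢
  exact half_mul_abs_eval_le (Nat.one_le_of_lt hpn) hpn.le (norm_eq_of_mem_sphere x)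
    (norm_eq_of_mem_sphere y) (fun w hw => hmax ⟨w, mem_sphere_zero_iff_norm.2 hw⟩)
    (by rwa [← dist_eq_norm, ← Subtype.dist_eq])

theorem sphere_norming_set_general {C : ℝ} (hC : 0 < C) :
    ∃ c, 0 < c ∧ ∀ d n : ℕ, (d : ℝ) ^ ((1 : ℝ) / 2) * π / (4 * C) ≤ n →
      ∃ 𝒞 : Finset (Sph d), (𝒞.card : ℝ) ≤ c * (4 * n / π) ^ d ∧
        ∀ P : Sph d → ℝ, IsSphPoly d n P →
          (∃ z ∈ 𝒞, 1 / 2 * supNorm P ≤ |P z|) ∧ ∀ z ∈ 𝒞, |P z| ≤ supNorm P := by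
  obtain ⟨c, hc, hcard⟩ := exists_forall_sq_mul_pow_le_mul_pow hC
  refine ⟨c, hc, fun d n hdn => ?_⟩
  rcases n.eq_zero_or_pos with rfl | hn
  · refine ⟨∅, ?_, fun P ⟨p, hp, _⟩ => absurd hp ?_⟩
    · rw [Finset.card_empty, Nat.cast_zero]
      positivity
    · rw [Nat.cast_zero]
      exact p.totalDegree.cast_nonneg.not_gt
  · obtain ⟨𝒞, h𝒞_card, h𝒞⟩ := exists_finset_sph_card_le_forall_dist_lt d
      (δ := 1 / n) (by positivity)
    refine ⟨𝒞, h𝒞_card.trans ?_, fun P hP => ⟨?_, fun z _ => abs_le_supNorm hP.continuous z⟩⟩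
    · rw [mul_one_div, div_div_eq_mul_div]
      exact hcard d n hn (by rwa [sqrt_eq_rpow])
    · have : Nonempty (Sph d) := (NormedSpace.sphere_nonempty.2 zero_le_one).to_subtype
      obtain ⟨x, hx⟩ := exists_abs_eq_supNorm hP.continuous
      obtain ⟨z, hz, hxz⟩ := h𝒞 x
      exact ⟨z, hz, hP.half_mul_supNorm_le hx hxz.le⟩

/-- Norming set for `Π_n^d`: there is a set `𝒞` of `O(d^{1/2}(4n/π)^d)` points such that
`(1/2)·sup_{S^d}|P| ≤ max_{z ∈ 𝒞} |P z| ≤ sup_{S^d}|P|` for all `P ∈ Π_n^d`. -/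
theorem sphere_norming_set :
    ∃ C c : ℝ, 0 < C ∧ 0 < c ∧
      ∀ (d n : ℕ), 1 ≤ d → (d : ℝ) ^ ((1 : ℝ)/2) * Real.pi / (4 * C) ≤ (n : ℝ) →
        ∃ 𝒞 : Finset (Sph d),
          (𝒞.card : ℝ) ≤ c * (d : ℝ) ^ ((1 : ℝ)/2) * (4 * (n : ℝ) / Real.pi) ^ d ∧
          ∀ P : Sph d → ℝ, IsSphPoly d n P →
            (∃ z ∈ 𝒞, (1 / 2) * supNorm P ≤ |P z|) ∧ ∀ z ∈ 𝒞, |P z| ≤ supNorm P := by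
  obtain ⟨c, hc, hnorming⟩ := sphere_norming_set_general one_pos
  refine ⟨1, c, one_pos, hc, fun d n hd hdn => ?_⟩
  obtain ⟨𝒞, hcard, h𝒞⟩ := hnorming d n hdn
  refine ⟨𝒞, hcard.trans ?_, h𝒞⟩
  gcongr
  exact le_mul_of_one_le_right hc.le (one_le_rpow (mod_cast hd) (by norm_num))

end
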